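/- Let x : ℕ → ℝ be defined by x₀ = 1/2 and x_k = 3x_{k-1}(1 - x_{k-1}) for k ≥ 1. Then the limit C_o = lim_{k→∞} k^{3/2}·[(x_{2k+1} - 2/3) - (1/(6·k^{1/2}) - 1/(24k) - (11/192)·ln(k)/k^{3/2})] exists as a real number, and the limit C_e = lim_{k→∞} k^{3/2}·[(2/3 - x_{2k}) - (1/(6·k^{1/2}) + 1/(24k) - (11/192)·ln(k)/k^{3/2})] exists as a real number. -/

import Mathlib

open Filter Topology

lemma aux_log (t : ℝ) (h0 : 0 ≤ t) (h1 : t ≤ 1/2) : |Real.log (1 - t) + t| ≤ 2 * t^2 := by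
  have h := Real.abs_log_sub_add_sum_range_le (x := t) (by rw [abs_of_nonneg h0]; linarith) 1
  simp only [Finset.sum_range_one, abs_of_nonneg h0] at h
  norm_num at h
  have h2 : t^2 / (1 - t) ≤ 2 * t^2 := by
    rw [div_le_iff₀ (by linarith)]
    nlinarith [sq_nonneg t, mul_nonneg (sq_nonneg t) (by linarith : 0 ≤ 1/2 - t)]
  rw [add_comm]
  exact h.trans h2

lemma aux_step (e : ℝ) (h0 : 0 < e) (h1 : e ≤ 1/6) :
    |((1 / (e - 18*e^3 + 27*e^4))^2 + 3 * (1 / (e - 18*e^3 + 27*e^4))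
        - 99/2 * Real.log (1 / (e - 18*e^3 + 27*e^4)))
      - ((1/e)^2 + 3 * (1/e) - 99/2 * Real.log (1/e)) - 36| ≤ 100000 * e^3 := by
  obtain ⟨τ, hτ⟩ : ∃ τ, τ = 18 - 27 * e := ⟨_, rfl⟩
  obtain ⟨t, ht⟩ : ∃ t, t = e^2 * τ := ⟨_, rfl⟩
  have hτ0 : 0 ≤ τ := by linarith
  have hτ1 : τ ≤ 18 := by linarith
  have ht0 : 0 ≤ t := by rw [ht]; positivity
  have he2 : e^2 ≤ 1/36 := by nlinarith
  have ht18 : t ≤ 18 * e^2 := by rw [ht]; nlinarith [sq_nonneg e]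
  have ht1 : t ≤ 1/2 := by linarith
  have hp : 0 < 1 - t := by linarith
  have hL := aux_log t ht0 ht1
  have he' : e - 18*e^3 + 27*e^4 = e * (1 - t) := by rw [ht, hτ]; ring
  rw [he']
  have hlog : Real.log (1 / (e * (1 - t))) = Real.log (1/e) - Real.log (1 - t) := by
    rw [one_div, one_div, Real.log_inv, Real.log_inv, Real.log_mul h0.ne' hp.ne']; ring
  rw [hlog]
  have hi : 1 / (1 - t) ≤ 2 := by rw [div_le_iff₀ hp]; linarith
  have hi0 : 0 ≤ 1 / (1 - t) := by positivity
  obtain ⟨i, hidef⟩ : ∃ i, i = 1 / (1 - t) := ⟨_, rfl⟩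
  have him : i * (1 - t) = 1 := by rw [hidef]; field_simp
  rw [← hidef] at hi hi0
  have key : ((1 / (e * (1 - t)))^2 + 3 * (1 / (e * (1 - t)))
        - 99/2 * (Real.log (1/e) - Real.log (1 - t)))
      - ((1/e)^2 + 3 * (1/e) - 99/2 * Real.log (1/e)) - 36
      = 99/2 * (Real.log (1 - t) + t) + e^3 * (-(3159/2) + 2187 * e
          + e * τ^3 * (4 - 3*t) * i^2 + 3 * τ^2 * i) := by
    rw [hidef]
    have : 1 - t ≠ 0 := hp.ne'
    have hz : (1 / (e * (1 - t)))^2 + 3 * (1 / (e * (1 - t))) - ((1/e)^2 + 3 * (1/e)) - 36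
      = 99/2 * t + e^3 * (-(3159/2) + 2187 * e
          + e * τ^3 * (4 - 3*t) * (1/(1-t))^2 + 3 * τ^2 * (1/(1-t))) := by
      have z1 : (1 / (e * (1 - t)))^2 - (1/e)^2
          = (1/e)^2 * (2*t + 3*t^2 + t^3 * (4 - 3*t) * (1/(1-t))^2) := by
        field_simp
        ring
      have z2 : 1 / (e * (1 - t)) - 1/e = (1/e) * (t + t^2 * (1/(1-t))) := by
        field_simp
        ring
      have z3 : (1/e)^2 * (2*t + 3*t^2 + t^3 * (4 - 3*t) * (1/(1-t))^2)
          + 3 * ((1/e) * (t + t^2 * (1/(1-t)))) - 36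
          = 99/2 * t + e^3 * (-(3159/2) + 2187 * e
          + e * τ^3 * (4 - 3*t) * (1/(1-t))^2 + 3 * τ^2 * (1/(1-t))) := by
        rw [← hidef]
        have y1 : (1/e)^2 * t = τ := by rw [ht]; field_simp
        have y2 : (1/e) * t = e * τ := by rw [ht]; field_simp
        calc _ = ((1/e)^2 * t) * (2 + 3*t + t^2 * (4 - 3*t) * i^2)
              + 3 * (((1/e) * t) * (1 + t * i)) - 36 := by ring
          _ = τ * (2 + 3*t + t^2 * (4 - 3*t) * i^2)
              + 3 * ((e * τ) * (1 + t * i)) - 36 := by rw [y1, y2]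
          _ = τ * (2 + 3*(e^2*τ)) + 3 * (e * τ) - 36 + e^4 * τ^3 * (4 - 3*t) * i^2
              + 3 * e^3 * τ^2 * i := by rw [ht]; ring
          _ = _ := by
            have : τ * (2 + 3*(e^2*τ)) + 3 * (e * τ) - 36
              = 99/2 * t + e^3 * (-(3159/2) + 2187 * e) := by rw [ht, hτ]; ring
            rw [this]; ring
      linarith
    linarith
  rw [key]
  have hb : |(-(3159/2) + 2187 * e + e * τ^3 * (4 - 3*t) * i^2 + 3 * τ^2 * i)| ≤ 90000 := by
    have a1 : τ^2 ≤ 18^2 := by gcongr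
    have a2 : τ^3 ≤ 18^3 := by gcongr
    have a3 : i^2 ≤ 2^2 := by gcongr
    have b1 : 0 ≤ τ^2 * i := by positivity
    have b2 : τ^2 * i ≤ 18^2 * 2 := by gcongr
    have c0 : 0 ≤ 4 - 3 * t := by linarith
    have c1 : 0 ≤ e * τ^3 * (4 - 3*t) * i^2 := by positivity
    have c2 : e * τ^3 * (4 - 3*t) * i^2 ≤ 1/6 * 18^3 * 4 * 2^2 := by
      gcongr
      linarith
    rw [abs_le]
    constructor <;> nlinarith
  have ht2 : t^2 ≤ 54 * e^3 := by
    have : t^2 ≤ (18 * e^2)^2 := by gcongr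
    have h3 : 0 < e^3 := by positivity
    nlinarith
  have h3 : 0 < e^3 := by positivity
  calc _ ≤ |99/2 * (Real.log (1 - t) + t)| + |e^3 * (-(3159/2) + 2187 * e
          + e * τ^3 * (4 - 3*t) * i^2 + 3 * τ^2 * i)| := abs_add_le _ _
    _ ≤ 99/2 * (2 * t^2) + e^3 * 90000 := by
        rw [abs_mul, abs_mul, abs_of_pos h3, abs_of_pos (by norm_num : (0:ℝ) < 99/2)]
        gcongr
    _ ≤ _ := by nlinarith

lemma aux_pos (e : ℕ → ℝ) (h0 : e 0 = 1/6)
    (hr : ∀ k, e (k+1) = e k - 18 * e k^3 + 27 * e k^4) (k : ℕ) :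
    0 < e k ∧ e k ≤ 1/6 ∧ 27 * ((k:ℝ) + 1) ≤ (1 / e k)^2 := by
  induction k with
  | zero => rw [h0]; norm_num
  | succ k ih =>
    obtain ⟨a, b, c⟩ := ih
    rw [hr]
    set y := e k with hy
    have hy2 : y^2 ≤ 1/36 := by nlinarith
    have hy3 : 0 < y^3 := by positivity
    obtain ⟨t, ht⟩ : ∃ t, t = 18*y^2 - 27*y^3 := ⟨_, rfl⟩
    have t1 : t ≤ 1/2 := by linarith
    have t0 : 27/2 * y^2 ≤ t := by rw [ht]; nlinarith [sq_nonneg y, mul_nonneg (sq_nonneg y) (by linarith : 0 ≤ 1/6 - y)]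
    have t00 : 0 ≤ t := le_trans (by positivity) t0
    have hE : y - 18*y^3 + 27*y^4 = y * (1 - t) := by rw [ht]; ring
    rw [hE]
    have hp : 0 < 1 - t := by linarith
    refine ⟨by positivity, by nlinarith, ?_⟩
    push_cast
    have : (1 / y)^2 + 27 ≤ (1 / (y * (1 - t)))^2 := by
      have h1 : (1 / (y * (1 - t)))^2 = (1/y)^2 * (1/(1-t))^2 := by
        field_simp
      have h2 : 1 + 2 * t ≤ (1/(1-t))^2 := by
        rw [div_pow, one_pow, le_div_iff₀ (by positivity)]
        nlinarith [mul_nonneg t00 t00, mul_nonneg (mul_nonneg t00 t00) hp.le]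
      have h3 : (1 / y)^2 + 27 = (1/y)^2 * (1 + 27 * y^2) := by field_simp
      rw [h1, h3]
      gcongr
      linarith
    linarith

lemma aux_lim (e : ℕ → ℝ) (h0 : e 0 = 1/6)
    (hr : ∀ k, e (k+1) = e k - 18 * e k^3 + 27 * e k^4) :
    ∃ c : ℝ, Tendsto (fun k : ℕ => (1 / e k)^2 + 3 * (1 / e k) - 99/2 * Real.log (1 / e k) - 36 * (k:ℝ))
      atTop (𝓝 c) := by
  set F : ℕ → ℝ := fun k => (1 / e k)^2 + 3 * (1 / e k) - 99/2 * Real.log (1 / e k) - 36 * (k:ℝ) with hF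
  have hb : ∀ k : ℕ, ‖F (k+1) - F k‖ ≤ 100000 * (1 / ((k:ℝ)+1)^((3:ℝ)/2)) := by
    intro k
    obtain ⟨a, b, c⟩ := aux_pos e h0 hr k
    have h := aux_step (e k) a b
    rw [← hr k] at h
    have h2 : F (k+1) - F k = ((1 / e (k+1))^2 + 3 * (1 / e (k+1)) - 99/2 * Real.log (1 / e (k+1)))
      - ((1/e k)^2 + 3 * (1/e k) - 99/2 * Real.log (1/e k)) - 36 := by
      simp only [hF]; push_cast; ring
    rw [Real.norm_eq_abs, h2]
    refine h.trans ?_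
    gcongr
    have hk : (0:ℝ) < (k:ℝ) + 1 := by positivity
    have h3 : (k:ℝ) + 1 ≤ (1 / e k)^2 := by linarith
    have h4 : ((k:ℝ)+1)^((3:ℝ)/2) ≤ (1 / e k)^3 := by
      calc ((k:ℝ)+1)^((3:ℝ)/2) ≤ ((1 / e k)^2)^((3:ℝ)/2) := by gcongr
        _ = (1 / e k)^3 := by
          rw [← Real.rpow_natCast, ← Real.rpow_natCast, ← Real.rpow_mul (by positivity)]
          norm_num
    rw [le_div_iff₀ (by positivity)]
    calc e k^3 * ((k:ℝ)+1)^((3:ℝ)/2) ≤ e k^3 * (1 / e k)^3 := by gcongr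
      _ = 1 := by field_simp
  have hs : Summable (fun k : ℕ => 100000 * (1 / ((k:ℝ)+1)^((3:ℝ)/2))) := by
    have := (summable_nat_add_iff 1).2 (Real.summable_one_div_nat_rpow.2 (by norm_num : (1:ℝ) < 3/2))
    push_cast at this
    exact this.mul_left _
  have hS : Summable (fun k => F (k+1) - F k) := Summable.of_norm_bounded hs hb
  have hT := hS.hasSum.tendsto_sum_nat
  simp only [Finset.sum_range_sub] at hT
  refine ⟨_, (hT.add_const (F 0)).congr fun k => by ring⟩

lemma aux_main (e : ℕ → ℝ) (h0 : e 0 = 1/6)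
    (hr : ∀ k, e (k+1) = e k - 18 * e k^3 + 27 * e k^4) :
    (∃ Ce : ℝ, Tendsto (fun k : ℕ => √(k:ℝ)^3 * (e k - (1 / (6 * √(k:ℝ)) + 1 / (24 * (k:ℝ))
      - 11/192 * Real.log k / √(k:ℝ)^3))) atTop (𝓝 Ce)) ∧
    (∃ D : ℝ, Tendsto (fun k : ℕ => √(k:ℝ)^3 * (1 / (12 * (k:ℝ)) - 3 * e k^2)) atTop (𝓝 D)) := by
  obtain ⟨c, hc⟩ := aux_lim e h0 hr
  have hpos := aux_pos e h0 hr
  obtain ⟨s, hs⟩ : ∃ s : ℕ → ℝ, s = fun k => 1 / e k := ⟨_, rfl⟩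
  obtain ⟨r, hrr⟩ : ∃ r : ℕ → ℝ, r = fun k : ℕ => √(k:ℝ) := ⟨_, rfl⟩
  obtain ⟨l, hl⟩ : ∃ l : ℕ → ℝ, l = fun k : ℕ => Real.log (k:ℝ) := ⟨_, rfl⟩
  have hs0 : ∀ k, 0 < s k := fun k => by rw [hs]; exact one_div_pos.2 (hpos k).1
  have hes : ∀ k, e k = 1 / s k := fun k => by rw [hs]; simp
  have hr2 : ∀ k : ℕ, (k:ℝ) = r k^2 := fun k => by rw [hrr]; simp
  have hr0 : ∀ k, 1 ≤ k → 0 < r k := fun k hk => by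
    rw [hrr]; exact Real.sqrt_pos.2 (by exact_mod_cast hk)
  have hr00 : ∀ k, 0 ≤ r k := fun k => by rw [hrr]; exact Real.sqrt_nonneg _
  have hsr : ∀ k, r k ≤ s k := fun k => by
    have h := (hpos k).2.2
    have h1 : s k ^ 2 = (1 / e k)^2 := by rw [hs]
    rw [← h1, hr2 k] at h
    exact abs_le_of_sq_le_sq' (by nlinarith [sq_nonneg (r k)]) (hs0 k).le |>.2
  have rT : Tendsto r atTop atTop := by
    rw [hrr]; exact Real.tendsto_sqrt_atTop.comp tendsto_natCast_atTop_atTop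
  have sT : Tendsto s atTop atTop := tendsto_atTop_mono hsr rT
  have lT : Tendsto (fun k => l k / r k) atTop (𝓝 0) := by
    have h := (isLittleO_log_rpow_atTop (by norm_num : (0:ℝ) < 1/2)).tendsto_div_nhds_zero.comp
      (tendsto_natCast_atTop_atTop (R := ℝ))
    rw [hl, hrr]
    refine h.congr fun k => ?_
    simp [Real.sqrt_eq_rpow]
  have hi : Tendsto (fun k => (s k)⁻¹) atTop (𝓝 0) := tendsto_inv_atTop_zero.comp sT
  have hri : Tendsto (fun k => (r k)⁻¹) atTop (𝓝 0) := tendsto_inv_atTop_zero.comp rT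
  have hls : Tendsto (fun k => Real.log (s k) / s k) atTop (𝓝 0) := by
    have h := Real.isLittleO_log_id_atTop.tendsto_div_nhds_zero.comp sT
    exact h
  obtain ⟨C, hC⟩ : ∃ C : ℕ → ℝ, C = fun k => s k^2 + 3 * s k - 99/2 * Real.log (s k) - 36 * r k^2 :=
    ⟨_, rfl⟩
  have CT : Tendsto C atTop (𝓝 c) := by
    refine hc.congr fun k => ?_
    rw [hC, hs]; simp only [hr2 k]
  have hCk : ∀ k, C k = s k^2 + 3 * s k - 99/2 * Real.log (s k) - 36 * r k^2 := fun k => by rw [hC]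
  -- r / s tends to 1/6
  have T1 : Tendsto (fun k => r k / s k) atTop (𝓝 (1/6)) := by
    have h : Tendsto (fun k => (1 + 3 * (s k)⁻¹ - 99/2 * (Real.log (s k) / s k) * (s k)⁻¹
        - C k * (s k)⁻¹ * (s k)⁻¹) / 36) atTop (𝓝 ((1 + 3 * 0 - 99/2 * 0 * 0 - c * 0 * 0)/36)) :=
      ((((hi.const_mul 3).const_add 1).sub ((hls.const_mul _).mul hi)).sub
        ((CT.mul hi).mul hi)).div_const 36
    have h2 := h.sqrt
    have h6 : √((1 + 3 * 0 - 99/2 * 0 * 0 - c * 0 * 0)/36) = 1/6 := by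
      rw [show ((1 + 3 * 0 - 99/2 * 0 * 0 - c * 0 * 0)/36 : ℝ) = (1/6)^2 by ring]
      exact Real.sqrt_sq (by norm_num)
    rw [h6] at h2
    refine h2.congr fun k => ?_
    have h3 : (1 + 3 * (s k)⁻¹ - 99/2 * (Real.log (s k) / s k) * (s k)⁻¹
        - C k * (s k)⁻¹ * (s k)⁻¹) / 36 = (r k / s k)^2 := by
      rw [hCk k]
      have := (hs0 k).ne'
      field_simp
      ring
    rw [h3]
    exact Real.sqrt_sq (div_nonneg (hr00 k) (hs0 k).le)
  have T1' : Tendsto (fun k => s k / r k) atTop (𝓝 6) := by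
    have h := T1.inv₀ (by norm_num)
    norm_num at h
    exact h
  obtain ⟨M, hM⟩ : ∃ M : ℕ → ℝ, M = fun k => (s k + 3/2)^2 - 36 * r k^2 := ⟨_, rfl⟩
  obtain ⟨N, hN⟩ : ∃ N : ℕ → ℝ, N = fun k => M k - 99/4 * l k := ⟨_, rfl⟩
  have NT : Tendsto N atTop (𝓝 (c + 9/4 - 99/2 * Real.log (1/6))) := by
    have h := (CT.add_const (9/4)).sub ((T1.log (by norm_num)).const_mul (99/2))
    refine h.congr' ?_
    filter_upwards [eventually_ge_atTop 1] with k hk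
    have h1 : Real.log (r k / s k) = l k / 2 - Real.log (s k) := by
      rw [Real.log_div (hr0 k hk).ne' (hs0 k).ne', hrr, hl]
      simp only
      rw [Real.log_sqrt (by positivity)]
    rw [h1, hN, hM, hCk k]
    ring
  obtain ⟨ρ, hρ⟩ : ∃ ρ : ℕ → ℝ, ρ = fun k => r k / (s k + 3/2 + 6 * r k) := ⟨_, rfl⟩
  have ρT : Tendsto ρ atTop (𝓝 (1/12)) := by
    have h := (((T1'.add (hri.const_mul (3/2))).add_const 6)).inv₀ (by norm_num)
    norm_num at h
    refine h.congr' ?_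
    filter_upwards [eventually_ge_atTop 1] with k hk
    have := hr0 k hk
    have := hs0 k
    rw [hρ]
    field_simp
  obtain ⟨q, hq⟩ : ∃ q : ℕ → ℝ, q = fun k => s k + 3/2 - 6 * r k := ⟨_, rfl⟩
  have qT : Tendsto q atTop (𝓝 0) := by
    have h := ρT.mul ((NT.mul hri).add (lT.const_mul (99/4)))
    simp only [mul_zero, add_zero] at h
    refine h.congr' ?_
    filter_upwards [eventually_ge_atTop 1] with k hk
    have := hr0 k hk
    have := hs0 k
    rw [hρ, hN, hM, hq]
    field_simp
    ring
  obtain ⟨u, hu⟩ : ∃ u : ℕ → ℝ, u = fun k => r k * q k - 33/16 * l k := ⟨_, rfl⟩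
  obtain ⟨U, uT⟩ : ∃ U, Tendsto u atTop (𝓝 U) := by
    have h := (NT.mul ρT).sub ((((qT.mul ρT).mul lT)).const_mul (33/16))
    refine ⟨_, h.congr' ?_⟩
    filter_upwards [eventually_ge_atTop 1] with k hk
    have := hr0 k hk
    have := hs0 k
    rw [hu, hρ, hN, hM, hq]
    field_simp
    ring
  have hqs : ∀ k, s k = 6 * r k - 3/2 + q k := fun k => by rw [hq]; ring
  constructor
  · have h := (((T1.mul uT).const_mul (-1/6)).sub
      ((((qT.const_sub (3/2)).mul lT).mul T1).const_mul (11/192))).add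
      ((T1.mul (qT.const_sub (3/2))).const_mul (1/24))
    refine ⟨_, h.congr' ?_⟩
    filter_upwards [eventually_ge_atTop 1] with k hk
    have a1 := hr0 k hk
    have a2 := hs0 k
    have e1 : √(k:ℝ) = r k := by rw [hrr]
    have e2 : Real.log (k:ℝ) = l k := by rw [hl]
    rw [e1, e2, hr2 k, hes k, hu, hq]
    field_simp
    ring
  · have h := (((qT.const_sub (3/2)).mul T1).mul (T1.const_add (1/6))).const_mul (-1/2)
    refine ⟨_, h.congr' ?_⟩
    filter_upwards [eventually_ge_atTop 1] with k hk
    have a1 := hr0 k hk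
    have a2 := hs0 k
    have e1 : √(k:ℝ) = r k := by rw [hrr]
    rw [e1, hr2 k, hes k, hq]
    field_simp
    ring

theorem stmt_4 (x : ℕ → ℝ) (h0 : x 0 = 1/2)
    (hrec : ∀ k, x (k + 1) = 3 * x k * (1 - x k)) :
    (∃ Co : ℝ, Tendsto (fun k : ℕ => (k : ℝ)^((3:ℝ)/2) *
        ((x (2*k+1) - 2/3) -
          (1 / (6 * (k : ℝ)^((1:ℝ)/2)) - 1 / (24 * (k : ℝ)) -
            (11/192) * Real.log k / (k : ℝ)^((3:ℝ)/2)))) atTop (𝓝 Co)) ∧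
    (∃ Ce : ℝ, Tendsto (fun k : ℕ => (k : ℝ)^((3:ℝ)/2) *
        ((2/3 - x (2*k)) -
          (1 / (6 * (k : ℝ)^((1:ℝ)/2)) + 1 / (24 * (k : ℝ)) -
            (11/192) * Real.log k / (k : ℝ)^((3:ℝ)/2)))) atTop (𝓝 Ce)) := by
  obtain ⟨⟨A, hA⟩, ⟨D, hD⟩⟩ := aux_main (fun k => 2/3 - x (2*k)) (by norm_num [h0]) (by
    intro k
    rw [show 2 * (k+1) = (2*k+1)+1 by ring, hrec (2*k+1), hrec (2*k)]
    ring)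
  have p1 : ∀ k : ℕ, (k:ℝ)^((1:ℝ)/2) = √(k:ℝ) := fun k => (Real.sqrt_eq_rpow _).symm
  have p3 : ∀ k : ℕ, (k:ℝ)^((3:ℝ)/2) = √(k:ℝ)^3 := fun k => by
    rw [Real.sqrt_eq_rpow, ← Real.rpow_natCast, ← Real.rpow_mul (by positivity)]
    norm_num
  simp only [p1, p3]
  refine ⟨⟨_, (hA.add hD).congr fun k => ?_⟩, ⟨_, hA⟩⟩
  rw [hrec (2*k)]
  ring
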